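/- Let u be quasi-definite with SMOP (P_n), Jacobi matrix J, let c ∈ ℂ, and let û be quasi-definite with u = (x−c)²û, SMOP (Q_n) and Jacobi matrix Ĵ. Then W(Q_n, Q_{n+1})(c) ≠ 0 for all n ≥ 0, and, defining the semi-infinite matrices L (lower triangular with L_{n,n} = 1, L_{n,n−1} = α_{n,n−1}, L_{n,n−2} = α_{n,n−2}, all other entries 0, where the α's come from the expansion Q_n = P_n + α_{n,n−1}P_{n−1} + α_{n,n−2}P_{n−2}) and U (upper triangular with U_{n,n} = β_{n,n} = W(Q_{n+1},Q_{n+2})(c)/W(Q_n,Q_{n+1})(c), U_{n,n+1} = β_{n,n+1} = −W(Q_n,Q_{n+2})(c)/W(Q_n,Q_{n+1})(c), U_{n,n+2} = 1, all other entries 0), one has the entrywise matrix identities (J − cI)² = U·L and (Ĵ − cI)² = L·U. -/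

import Mathlib

open Polynomial

noncomputable section

/-- Apply a linear functional (identified with its moment sequence) to a polynomial:
`⟨u, p⟩ = Σ_k c_k u_k` for `p = Σ_k c_k x^k`. -/
def fapply (u : ℕ → ℂ) (p : Polynomial ℂ) : ℂ := p.sum fun k ck => ck * u k

/-- `P` is the sequence of monic orthogonal polynomials (SMOP) of the functional `u`. -/
def IsSMOP (u : ℕ → ℂ) (P : ℕ → Polynomial ℂ) : Prop :=
  (∀ n, (P n).Monic) ∧ (∀ n, (P n).natDegree = n) ∧
    (∀ n m, n ≠ m → fapply u (P n * P m) = 0) ∧ (∀ n, fapply u (P n * P n) ≠ 0)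

/-- A functional is quasi-definite iff it admits a SMOP. -/
def IsQuasiDefinite (u : ℕ → ℂ) : Prop := ∃ P, IsSMOP u P

/-- Three term recurrence relation `x P_n = P_{n+1} + b_n P_n + a_n P_{n-1}`,
with `P_{-1} = 0`, `P_0 = 1`. -/
def HasTTRR (P : ℕ → Polynomial ℂ) (a b : ℕ → ℂ) : Prop :=
  P 0 = 1 ∧ X * P 0 = P 1 + C (b 0) * P 0 ∧
    ∀ n, 1 ≤ n → X * P n = P (n + 1) + C (b n) * P n + C (a n) * P (n - 1)

/-- Wronskian `W(p,q)(x) = p(x) q'(x) - p'(x) q(x)`. -/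
def Wr (p q : Polynomial ℂ) (x : ℂ) : ℂ :=
  p.eval x * (derivative q).eval x - (derivative p).eval x * q.eval x

/-- The monic Jacobi matrix with diagonal `b`, superdiagonal `1` and subdiagonal
entries `J_{n+1,n} = a_{n+1}`. -/
def jacobi (a b : ℕ → ℂ) (i j : ℕ) : ℂ :=
  if i = j then b i else if j = i + 1 then 1 else if i = j + 1 then a i else 0

/-- Entrywise product of semi-infinite (banded) matrices; the sum has finite support. -/
def mprod (A B : ℕ → ℕ → ℂ) (i j : ℕ) : ℂ := ∑' k, A i k * B k j

/-- `w` is the moment sequence of the inverse functional `u⁻¹`: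
the convolution of the moments of `u` and `w` is `(1,0,0,…)`. -/
def IsInverseMoments (u w : ℕ → ℂ) : Prop :=
  ∀ n, ∑ k ∈ Finset.range (n + 1), u k * w (n - k) = if n = 0 then 1 else 0

/-- Apply a functional `u` to the second (outer) variable `y` of a bivariate polynomial
`D = Σ_k q_k(x) y^k`, giving `Σ_k u_k q_k(x)`. -/
def fapplyY (u : ℕ → ℂ) (D : Polynomial (Polynomial ℂ)) : Polynomial ℂ :=
  D.sum fun k q => u k • q

/-- Lower triangular matrix with `1`'s on the diagonal and the connection coefficients
`α_{n,n-1}`, `α_{n,n-2}` on the first two subdiagonals. -/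
def Lmat (α : ℕ → ℕ → ℂ) (i j : ℕ) : ℂ :=
  if i = j then 1 else if i = j + 1 then α i (i - 1)
    else if i = j + 2 then α i (i - 2) else 0

/-- Upper triangular matrix with diagonal `β_{n,n} = W(Q_{n+1},Q_{n+2})(c)/W(Q_n,Q_{n+1})(c)`,
superdiagonal `β_{n,n+1} = -W(Q_n,Q_{n+2})(c)/W(Q_n,Q_{n+1})(c)` and second superdiagonal `1`. -/
def Umat (Q : ℕ → Polynomial ℂ) (c : ℂ) (i j : ℕ) : ℂ :=
  if j = i then Wr (Q (i + 1)) (Q (i + 2)) c / Wr (Q i) (Q (i + 1)) c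
    else if j = i + 1 then -(Wr (Q i) (Q (i + 2)) c) / Wr (Q i) (Q (i + 1)) c
      else if j = i + 2 then 1 else 0

/-- `J - cI` for a monic Jacobi matrix. -/
def Jc (a b : ℕ → ℂ) (c : ℂ) (i j : ℕ) : ℂ :=
  jacobi a b i j - if i = j then c else 0

/-!
The SMOPs `P` and `Q` are bases of `ℂ[X]`, and all four matrices are matrices of linear operators
in these bases: `J - cI` and `Ĵ - cI` represent multiplication by `x - c`, `L` expands `Q` in `P`,
and `U` expands `(x - c)² P` in `Q`. Both factorizations then say that the matrix of a composition
is the product of the matrices.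

That `U` has the stated form comes from duality: since `⟨u, P_n Q_k⟩ = ⟨û, (x - c)² P_n Q_k⟩`, the
coordinates of `(x - c)² P_n` in `Q` are, up to nonzero factors, the `n`-th column of `L`. Hence
`(x - c)² P_n = Q_{n+2} + r_n Q_{n+1} + s_n Q_n` with `s_n ≠ 0`. The left side has a double zero at
`c`, so its Wronskian at `c` with any polynomial vanishes; pairing with `Q_{n+1}` and `Q_n`
determines `s_n` and `r_n` as quotients of Wronskians.
-/

open Module

section OperatorMatrix

variable {M N K : Type*} [AddCommGroup M] [Module ℂ M] [AddCommGroup N] [Module ℂ N]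
  [AddCommGroup K] [Module ℂ K]

/-- The semi-infinite matrix of a linear map `T`, whose `i`-th row lists the coordinates of
`T (e i)` in the basis `f`. This is the transpose of the convention of `LinearMap.toMatrix`, so that
the matrix of `S ∘ₗ T` is the matrix of `T` times the matrix of `S`. -/
def rowMatrix (e : Basis ℕ ℂ M) (f : Basis ℕ ℂ N) (T : M →ₗ[ℂ] N) (i j : ℕ) : ℂ :=
  f.repr (T (e i)) j

theorem mprod_rowMatrix (e : Basis ℕ ℂ M) (f : Basis ℕ ℂ N) (h : Basis ℕ ℂ K)
    (T : M →ₗ[ℂ] N) (S : N →ₗ[ℂ] K) :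
    mprod (rowMatrix e f T) (rowMatrix f h S) = rowMatrix e h (S ∘ₗ T) := by
  funext i j
  have expand : S (T (e i)) = (f.repr (T (e i))).sum fun k z => z • S (f k) := by
    conv_lhs => rw [← f.linearCombination_repr (T (e i)), Finsupp.apply_linearCombination]
    rfl
  have finite_sum : mprod (rowMatrix e f T) (rowMatrix f h S) i j =
      ∑ k ∈ (f.repr (T (e i))).support, rowMatrix e f T i k * rowMatrix f h S k j :=
    tsum_eq_sum fun k hk => by rw [rowMatrix, Finsupp.notMem_support_iff.mp hk, zero_mul]
  rw [finite_sum]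
  simp only [rowMatrix, LinearMap.comp_apply, expand, Finsupp.sum, map_sum, map_smul,
    Finsupp.finsetSum_apply, Finsupp.smul_apply, smul_eq_mul]

end OperatorMatrix

theorem exists_basis_of_monic {R : Type*} [Ring R] [IsDomain R] {P : ℕ → R[X]}
    (hmonic : ∀ n, (P n).Monic) (hdeg : ∀ n, (P n).natDegree = n) :
    ∃ e : Basis ℕ R R[X], ⇑e = P := by
  let S : Polynomial.Sequence R :=
    ⟨P, fun n => by rw [degree_eq_natDegree (hmonic n).ne_zero, hdeg n]⟩
  have hunit : ∀ n, IsUnit (S n).leadingCoeff := fun n => (hmonic n).leadingCoeff.symm ▸ isUnit_one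
  exact ⟨S.basis hunit, funext (S.basis_eq_self hunit)⟩

/-- The linear functional on `ℂ[X]` with moment sequence `u`, as a linear map. -/
def momentFunctional (u : ℕ → ℂ) : ℂ[X] →ₗ[ℂ] ℂ :=
  lsum fun k => LinearMap.mulRight ℂ (u k)

theorem momentFunctional_apply (u : ℕ → ℂ) (p : ℂ[X]) : momentFunctional u p = fapply u p :=
  rfl

theorem fapply_monomial (u : ℕ → ℂ) (n : ℕ) (z : ℂ) : fapply u (monomial n z) = z * u n :=
  sum_monomial_index z _ (zero_mul _)

theorem fapply_eq_fapply_sq_mul {u v : ℕ → ℂ} {c : ℂ}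
    (hrel : ∀ n, u n = v (n + 2) - 2 * c * v (n + 1) + c ^ 2 * v n) (p : ℂ[X]) :
    fapply u p = fapply v ((X - C c) ^ 2 * p) := by
  suffices momentFunctional u = momentFunctional v ∘ₗ LinearMap.mulLeft ℂ ((X - C c) ^ 2) from
    LinearMap.congr_fun this p
  ext n
  have expand : (X - C c) ^ 2 * monomial n 1 =
      monomial (n + 2) 1 - (2 * c) • monomial (n + 1) 1 + c ^ 2 • monomial n (1 : ℂ) := by
    simp only [← X_pow_eq_monomial, smul_eq_C_mul, map_mul, map_pow, map_ofNat]
    ring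
  simp only [LinearMap.comp_apply, LinearMap.mulLeft_apply, expand, map_add, map_sub, map_smul,
    momentFunctional_apply, fapply_monomial, hrel n, smul_eq_mul, one_mul]

section Orthogonality

variable {u v : ℕ → ℂ} {e f : Basis ℕ ℂ ℂ[X]}

theorem IsSMOP.fapply_mul_eq_repr_mul (he : IsSMOP u e) (p : ℂ[X]) (k : ℕ) :
    fapply u (p * e k) = e.repr p k * fapply u (e k * e k) := by
  suffices momentFunctional u ∘ₗ LinearMap.mulRight ℂ (e k) =
      fapply u (e k * e k) • e.coord k by
    simpa only [LinearMap.comp_apply, LinearMap.mulRight_apply, LinearMap.smul_apply,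
      Basis.coord_apply, smul_eq_mul, momentFunctional_apply, mul_comm] using
      LinearMap.congr_fun this p
  refine e.ext fun i => ?_
  obtain ⟨-, -, orthogonal, -⟩ := he
  rcases eq_or_ne i k with rfl | hik
  · simp [momentFunctional_apply]
  · simp [momentFunctional_apply, orthogonal i k hik, hik]

theorem IsSMOP.rowMatrix_mulLeft_mul (he : IsSMOP u e) (hf : IsSMOP v f) {g : ℂ[X]}
    (hg : ∀ p, fapply u p = fapply v (g * p)) (n k : ℕ) :
    rowMatrix e f (LinearMap.mulLeft ℂ g) n k * fapply v (f k * f k) =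
      rowMatrix f e LinearMap.id k n * fapply u (e n * e n) :=
  calc rowMatrix e f (LinearMap.mulLeft ℂ g) n k * fapply v (f k * f k)
      = fapply v (g * e n * f k) := (hf.fapply_mul_eq_repr_mul _ k).symm
    _ = fapply u (f k * e n) := by rw [hg, mul_assoc, mul_comm (e n)]
    _ = rowMatrix f e LinearMap.id k n * fapply u (e n * e n) := he.fapply_mul_eq_repr_mul _ n

theorem IsSMOP.rowMatrix_mulLeft_eq_zero_iff (he : IsSMOP u e) (hf : IsSMOP v f) {g : ℂ[X]}
    (hg : ∀ p, fapply u p = fapply v (g * p)) (n k : ℕ) :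
    rowMatrix e f (LinearMap.mulLeft ℂ g) n k = 0 ↔ rowMatrix f e LinearMap.id k n = 0 := by
  rw [← mul_eq_zero_iff_right (hf.2.2.2 k), he.rowMatrix_mulLeft_mul hf hg,
    mul_eq_zero_iff_right (he.2.2.2 n)]

theorem IsSMOP.coeff_self {P : ℕ → ℂ[X]} (hP : IsSMOP u P) (n : ℕ) : (P n).coeff n = 1 := by
  simpa only [hP.2.1 n] using (hP.1 n).coeff_natDegree

theorem IsSMOP.coeff_eq_zero {P : ℕ → ℂ[X]} (hP : IsSMOP u P) {n m : ℕ} (hnm : n < m) :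
    (P n).coeff m = 0 :=
  coeff_eq_zero_of_natDegree_lt (by rwa [hP.2.1 n])

theorem IsSMOP.exists_mul_eq_add_add (he : IsSMOP u e) (hf : IsSMOP v f) {g : ℂ[X]}
    (hmonic : g.Monic) (hdeg : g.natDegree = 2) (hg : ∀ p, fapply u p = fapply v (g * p))
    {α : ℕ → ℕ → ℂ} (hL : rowMatrix f e LinearMap.id = Lmat α) (n : ℕ) :
    ∃ r s : ℂ, s ≠ 0 ∧ g * e n = f (n + 2) + C r * f (n + 1) + C s * f n := by
  let d := f.repr (g * e n)
  have d_eq_zero_iff (k : ℕ) : d k = 0 ↔ Lmat α k n = 0 :=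
    hL ▸ he.rowMatrix_mulLeft_eq_zero_iff hf hg n k
  have d_self_ne_zero : d n ≠ 0 := by simp [d_eq_zero_iff, Lmat]
  have d_support : d.support ⊆ {n, n + 1, n + 2} := by
    intro k hk
    contrapose! hk
    simp only [Finset.mem_insert, Finset.mem_singleton, not_or] at hk
    rw [Finsupp.notMem_support_iff, d_eq_zero_iff]
    simp [Lmat, hk]
  have expansion : g * e n = C (d (n + 2)) * f (n + 2) + C (d (n + 1)) * f (n + 1) +
      C (d n) * f n := by
    rw [← f.linearCombination_repr (g * e n), Finsupp.linearCombination_apply,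
      Finsupp.sum_of_support_subset _ d_support _ fun k _ => zero_smul ℂ (f k),
      Finset.sum_insert (by simp), Finset.sum_pair (by simp)]
    simp only [smul_eq_C_mul, d]
    ring
  have d_top : d (n + 2) = 1 := by
    have coeff_left : (g * e n).coeff (n + 2) = 1 := by
      have natDegree_left : (g * e n).natDegree = n + 2 := by
        rw [hmonic.natDegree_mul (he.1 n), hdeg, he.2.1, add_comm]
      simpa only [natDegree_left] using (hmonic.mul (he.1 n)).coeff_natDegree
    simpa [expansion, hf.coeff_self, hf.coeff_eq_zero] using coeff_left
  exact ⟨d (n + 1), d n, d_self_ne_zero, by rw [expansion, d_top, C_1, one_mul]⟩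

end Orthogonality

section BandedMatrices

variable {e f : Basis ℕ ℂ ℂ[X]}

theorem HasTTRR.X_sub_C_mul_zero {P : ℕ → ℂ[X]} {a b : ℕ → ℂ} (h : HasTTRR P a b) (c : ℂ) :
    (X - C c) * P 0 = P 1 + (b 0 - c) • P 0 := by
  rw [smul_eq_C_mul, C_sub]
  linear_combination h.2.1

theorem HasTTRR.X_sub_C_mul_succ {P : ℕ → ℂ[X]} {a b : ℕ → ℂ} (h : HasTTRR P a b) (c : ℂ) (n : ℕ) :
    (X - C c) * P (n + 1) = P (n + 2) + (b (n + 1) - c) • P (n + 1) + a (n + 1) • P n := by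
  have recurrence : X * P (n + 1) = P (n + 2) + C (b (n + 1)) * P (n + 1) + C (a (n + 1)) * P n :=
    h.2.2 (n + 1) n.succ_pos
  rw [smul_eq_C_mul, smul_eq_C_mul, C_sub]
  linear_combination recurrence

theorem HasTTRR.rowMatrix_mulLeft {a b : ℕ → ℂ} (h : HasTTRR e a b) (c : ℂ) :
    rowMatrix e e (LinearMap.mulLeft ℂ (X - C c)) = Jc a b c := by
  funext i j
  rcases i with _ | i
  · simp only [rowMatrix, LinearMap.mulLeft_apply, h.X_sub_C_mul_zero, map_add, map_smul,
      Basis.repr_self, Finsupp.add_apply, Finsupp.smul_apply, Finsupp.single_apply, smul_eq_mul,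
      Jc, jacobi]
    grind
  · simp only [rowMatrix, LinearMap.mulLeft_apply, h.X_sub_C_mul_succ, map_add, map_smul,
      Basis.repr_self, Finsupp.add_apply, Finsupp.smul_apply, Finsupp.single_apply, smul_eq_mul,
      Jc, jacobi]
    grind

theorem rowMatrix_id_eq_Lmat {α : ℕ → ℕ → ℂ} (h0 : f 0 = e 0) (h1 : f 1 = e 1 + C (α 1 0) * e 0)
    (h : ∀ n, 2 ≤ n → f n = e n + C (α n (n - 1)) * e (n - 1) + C (α n (n - 2)) * e (n - 2)) :
    rowMatrix f e LinearMap.id = Lmat α := by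
  funext i j
  rcases i with _ | _ | i
  · simp [rowMatrix, h0, Finsupp.single_apply, Lmat]
  · simp only [rowMatrix, LinearMap.id_apply, zero_add, h1, ← smul_eq_C_mul, map_add, map_smul,
      Basis.repr_self, Finsupp.add_apply, Finsupp.smul_apply, Finsupp.single_apply, smul_eq_mul,
      Lmat]
    grind
  · simp only [rowMatrix, LinearMap.id_apply, h (i + 2) (Nat.le_add_left 2 i), ← smul_eq_C_mul,
      map_add, map_smul, Basis.repr_self, Finsupp.add_apply, Finsupp.smul_apply,
      Finsupp.single_apply, smul_eq_mul, Lmat]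
    grind

end BandedMatrices

section Wronskian

variable {c r s : ℂ} {p q₀ q₁ q₂ : ℂ[X]}

theorem Wr_sq_mul_right (q p : ℂ[X]) (c : ℂ) : Wr q ((X - C c) ^ 2 * p) c = 0 := by
  simp [Wr, derivative_pow]

theorem Wr_add_add_right (q : ℂ[X]) (x : ℂ) :
    Wr q (q₂ + C r * q₁ + C s * q₀) x = Wr q q₂ x + r * Wr q q₁ x + s * Wr q q₀ x := by
  simp only [Wr, derivative_add, derivative_C_mul, eval_add, eval_mul, eval_C]
  ring

theorem Wr_succ_eq_mul (h : (X - C c) ^ 2 * p = q₂ + C r * q₁ + C s * q₀) :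
    Wr q₁ q₂ c = s * Wr q₀ q₁ c := by
  have pairing := Wr_sq_mul_right q₁ p c
  rw [h, Wr_add_add_right] at pairing
  unfold Wr at pairing ⊢
  linear_combination pairing

theorem Wr_skip_eq_neg_mul (h : (X - C c) ^ 2 * p = q₂ + C r * q₁ + C s * q₀) :
    Wr q₀ q₂ c = -r * Wr q₀ q₁ c := by
  have pairing := Wr_sq_mul_right q₀ p c
  rw [h, Wr_add_add_right] at pairing
  unfold Wr at pairing ⊢
  linear_combination pairing

theorem IsSMOP.Wr_zero_one {v : ℕ → ℂ} {Q : ℕ → ℂ[X]} (hQ : IsSMOP v Q) (c : ℂ) :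
    Wr (Q 0) (Q 1) c = 1 := by
  rw [(hQ.1 0).natDegree_eq_zero.mp (hQ.2.1 0), (hQ.1 1).eq_X_add_C (hQ.2.1 1)]
  simp [Wr]

end Wronskian

section ThreeTermExpansion

variable {c : ℂ} {r s : ℕ → ℂ}

theorem IsSMOP.Wr_ne_zero {P Q : ℕ → ℂ[X]} {v : ℕ → ℂ} (hQ : IsSMOP v Q) (hs : ∀ n, s n ≠ 0)
    (h : ∀ n, (X - C c) ^ 2 * P n = Q (n + 2) + C (r n) * Q (n + 1) + C (s n) * Q n) (n : ℕ) :
    Wr (Q n) (Q (n + 1)) c ≠ 0 := by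
  induction n with
  | zero => simp [hQ.Wr_zero_one]
  | succ n ih =>
    rw [Wr_succ_eq_mul (h n)]
    exact mul_ne_zero (hs n) ih

theorem rowMatrix_mulLeft_eq_Umat {e f : Basis ℕ ℂ ℂ[X]}
    (hW : ∀ n, Wr (f n) (f (n + 1)) c ≠ 0)
    (h : ∀ n, (X - C c) ^ 2 * e n = f (n + 2) + C (r n) * f (n + 1) + C (s n) * f n) :
    rowMatrix e f (LinearMap.mulLeft ℂ ((X - C c) ^ 2)) = Umat f c := by
  funext i j
  have diagonal : Wr (f (i + 1)) (f (i + 2)) c / Wr (f i) (f (i + 1)) c = s i := by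
    rw [Wr_succ_eq_mul (h i), mul_div_cancel_right₀ _ (hW i)]
  have superdiagonal : -Wr (f i) (f (i + 2)) c / Wr (f i) (f (i + 1)) c = r i := by
    rw [Wr_skip_eq_neg_mul (h i), neg_mul, neg_neg, mul_div_cancel_right₀ _ (hW i)]
  simp only [rowMatrix, LinearMap.mulLeft_apply, h, ← smul_eq_C_mul, map_add, map_smul,
    Basis.repr_self, Finsupp.add_apply, Finsupp.smul_apply, Finsupp.single_apply, smul_eq_mul,
    Umat, diagonal, superdiagonal]
  grind

end ThreeTermExpansion

/-- for a quadratic Geronimus transformation `u = (x-c)² û`, one has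
`W(Q_n,Q_{n+1})(c) ≠ 0` for all `n`, `(J - cI)² = U·L` and `(Ĵ - cI)² = L·U`. -/
theorem stmt_4 (u : ℕ → ℂ) (c : ℂ) (P : ℕ → Polynomial ℂ) (hP : IsSMOP u P)
    (a b : ℕ → ℂ) (hrec : HasTTRR P a b) (ha : ∀ n, 1 ≤ n → a n ≠ 0)
    (uh : ℕ → ℂ)
    (hrel : ∀ n, u n = uh (n + 2) - 2 * c * uh (n + 1) + c ^ 2 * uh n)
    (Q : ℕ → Polynomial ℂ) (hQ : IsSMOP uh Q)
    (ah bh : ℕ → ℂ) (hrecQ : HasTTRR Q ah bh) (hah : ∀ n, 1 ≤ n → ah n ≠ 0)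
    (α : ℕ → ℕ → ℂ)
    (hQ0 : Q 0 = P 0)
    (hQ1 : Q 1 = P 1 + C (α 1 0) * P 0)
    (hQn : ∀ n, 2 ≤ n → Q n = P n + C (α n (n - 1)) * P (n - 1) + C (α n (n - 2)) * P (n - 2)) :
    (∀ n, Wr (Q n) (Q (n + 1)) c ≠ 0)
    ∧ (∀ i j, mprod (Jc a b c) (Jc a b c) i j = mprod (Umat Q c) (Lmat α) i j)
    ∧ (∀ i j, mprod (Jc ah bh c) (Jc ah bh c) i j = mprod (Lmat α) (Umat Q c) i j) := by
  obtain ⟨p, rfl⟩ := exists_basis_of_monic hP.1 hP.2.1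
  obtain ⟨q, rfl⟩ := exists_basis_of_monic hQ.1 hQ.2.1
  have hL : rowMatrix q p LinearMap.id = Lmat α := rowMatrix_id_eq_Lmat hQ0 hQ1 hQn
  have hmonic : ((X - C c) ^ 2).Monic := (monic_X_sub_C c).pow 2
  have hdeg : ((X - C c) ^ 2).natDegree = 2 := by simp [natDegree_pow]
  choose r s hs hexp using
    hP.exists_mul_eq_add_add hQ hmonic hdeg (fapply_eq_fapply_sq_mul hrel) hL
  have hW : ∀ n, Wr (q n) (q (n + 1)) c ≠ 0 := hQ.Wr_ne_zero hs hexp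
  have hU : rowMatrix p q (LinearMap.mulLeft ℂ ((X - C c) ^ 2)) = Umat q c :=
    rowMatrix_mulLeft_eq_Umat hW hexp
  have hsq : LinearMap.mulLeft ℂ (X - C c) ∘ₗ LinearMap.mulLeft ℂ (X - C c) =
      LinearMap.mulLeft ℂ ((X - C c) ^ 2) := by
    rw [sq, LinearMap.mulLeft_mul]
  refine ⟨hW, fun i j => ?_, fun i j => ?_⟩
  · rw [← hrec.rowMatrix_mulLeft c, ← hU, ← hL, mprod_rowMatrix, mprod_rowMatrix, hsq,
      LinearMap.id_comp]
  · rw [← hrecQ.rowMatrix_mulLeft c, ← hU, ← hL, mprod_rowMatrix, mprod_rowMatrix, hsq,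
      LinearMap.comp_id]
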